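/- Let T > 0, let λ : (0,T] → (0,∞), Λ(t) := ∫₀ᵗ λ(s) ds, and define ρ(t,x,ξ) := (1 + (λ(t)²/Λ(t))·⟨x⟩⟨ξ⟩·ln(⟨x⟩⟨ξ⟩))^{1/2} for t ∈ (0,T], x, ξ ∈ ℝ^d. Then for every t ∈ (0,T], all x, ξ ∈ ℝ^d, and every coordinate index j, one has |∂_{x_j}ρ(t,x,ξ)| ≤ ρ(t,x,ξ)/⟨x⟩ and |∂_{ξ_j}ρ(t,x,ξ)| ≤ ρ(t,x,ξ)/⟨ξ⟩. -/

import Mathlib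

/-- `Λ(t) = ∫₀ᵗ λ(s) ds`. -/
noncomputable def Lam (lam : ℝ → ℝ) (t : ℝ) : ℝ := ∫ s in (0:ℝ)..t, lam s

/-- The weight `⟨y⟩ = (e + |y|²)^{1/2}`. -/
noncomputable def jw {d : ℕ} (y : EuclideanSpace ℝ (Fin d)) : ℝ :=
  Real.sqrt (Real.exp 1 + ‖y‖ ^ 2)

/-- The symbol `ρ(t,x,ξ) = (1 + (λ(t)²/Λ(t))·⟨x⟩⟨ξ⟩·ln(⟨x⟩⟨ξ⟩))^{1/2}`. -/
noncomputable def rho (lam : ℝ → ℝ) {d : ℕ} (t : ℝ)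
    (x ξ : EuclideanSpace ℝ (Fin d)) : ℝ :=
  Real.sqrt (1 + lam t ^ 2 / Lam lam t * (jw x * jw ξ) * Real.log (jw x * jw ξ))

theorem Lam_nonneg_aux (T : ℝ) (lam : ℝ → ℝ)
    (hpos : ∀ t ∈ Set.Ioc 0 T, 0 < lam t) (t : ℝ) (ht : t ∈ Set.Ioc 0 T) : 0 ≤ Lam lam t := by
  unfold Lam
  rw [intervalIntegral.integral_of_le ht.1.le]
  exact MeasureTheory.setIntegral_nonneg measurableSet_Ioc
    (fun s hs => (hpos s ⟨hs.1, hs.2.trans ht.2⟩).le)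

theorem jw_pos_aux {d : ℕ} (y : EuclideanSpace ℝ (Fin d)) : 0 < jw y := by
  unfold jw
  positivity

theorem half_le_log_jw {d : ℕ} (y : EuclideanSpace ℝ (Fin d)) : 1 / 2 ≤ Real.log (jw y) := by
  unfold jw
  rw [Real.log_sqrt (by positivity)]
  have : 1 ≤ Real.log (Real.exp 1 + ‖y‖ ^ 2) := by
    rw [Real.le_log_iff_exp_le (by positivity)]
    nlinarith [sq_nonneg ‖y‖]
  linarith

theorem jw_hasFDerivAt {d : ℕ} (x : EuclideanSpace ℝ (Fin d)) :
    HasFDerivAt (fun y : EuclideanSpace ℝ (Fin d) => jw y)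
      ((1 / (2 * jw x)) • ((2 : ℝ) • (innerSL ℝ x))) x := by
  have h : HasFDerivAt (fun y : EuclideanSpace ℝ (Fin d) => Real.exp 1 + ‖y‖ ^ 2)
      ((2 : ℝ) • (innerSL ℝ x)) x := by
    have := (hasStrictFDerivAt_norm_sq x).hasFDerivAt.const_add (Real.exp 1)
    have h2 : (2 : ℝ) • (innerSL ℝ x) = (2 : ℕ) • (innerSL ℝ x) := by
      ext v
      simp
    rw [h2]
    exact this
  exact h.sqrt (by positivity)

theorem rho_bound_aux (lam : ℝ → ℝ) {d : ℕ} (t : ℝ) (hL : 0 ≤ Lam lam t)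
    (x ξ : EuclideanSpace ℝ (Fin d)) (j : Fin d) :
    |fderiv ℝ (fun x' => rho lam t x' ξ) x (EuclideanSpace.single j 1)| ≤
          rho lam t x ξ / jw x := by
  have hu := jw_pos_aux x
  have hv := jw_pos_aux ξ
  have hl : 1 ≤ Real.log (jw x * jw ξ) := by
    rw [Real.log_mul hu.ne' hv.ne']
    linarith [half_le_log_jw x, half_le_log_jw ξ]
  have hc : 0 ≤ lam t ^ 2 / Lam lam t := by positivity
  have hj := jw_hasFDerivAt x
  have hxj : |x j| ≤ jw x := by
    unfold jw
    apply Real.abs_le_sqrt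
    have h1 : |x j| ≤ ‖x‖ := by simpa using PiLp.norm_apply_le x j
    have h2 : x j ^ 2 ≤ ‖x‖ ^ 2 := sq_le_sq.2 (by simpa using h1)
    linarith [Real.exp_pos 1]
  have hg : HasDerivAt (fun u : ℝ => Real.sqrt (1 + lam t ^ 2 / Lam lam t * (u * jw ξ) *
      Real.log (u * jw ξ))) (lam t ^ 2 / Lam lam t * jw ξ * (Real.log (jw x * jw ξ) + 1)
        / (2 * rho lam t x ξ)) (jw x) := by
    have h0 : HasDerivAt (fun u : ℝ => u * jw ξ) (jw ξ) (jw x) := hasDerivAt_mul_const _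
    have h1 := (((h0.const_mul (lam t ^ 2 / Lam lam t)).mul
      (h0.log (mul_pos hu hv).ne')).const_add 1).sqrt (by
        simp only [Pi.mul_apply]
        have : 0 ≤ lam t ^ 2 / Lam lam t * (jw x * jw ξ) * Real.log (jw x * jw ξ) := by
          positivity
        linarith)
    convert h1 using 1
    simp only [rho, Pi.mul_apply]
    congr 1
    field_simp
  have hmain := hg.comp_hasFDerivAt x hj
  have hnn : 0 ≤ lam t ^ 2 / Lam lam t * (jw x * jw ξ) * Real.log (jw x * jw ξ) := by
    positivity
  have hr2 : rho lam t x ξ ^ 2 =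
      1 + lam t ^ 2 / Lam lam t * (jw x * jw ξ) * Real.log (jw x * jw ξ) :=
    Real.sq_sqrt (by linarith)
  have hr : 0 < rho lam t x ξ := Real.sqrt_pos.2 (by linarith)
  have hf : fderiv ℝ (fun x' => rho lam t x' ξ) x = _ := hmain.fderiv
  rw [hf]
  generalize rho lam t x ξ = r at *
  generalize lam t ^ 2 / Lam lam t = c at *
  generalize Real.log (jw x * jw ξ) = l at *
  have he : ((c * jw ξ * (l + 1) / (2 * r)) • ((1 / (2 * jw x)) • ((2 : ℝ) • (innerSL ℝ x))))
      (EuclideanSpace.single j 1) = (c * jw ξ * (l + 1) / (2 * r)) * (x j / jw x) := by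
    simp [EuclideanSpace.inner_single_right]
    field_simp
    simp
  rw [he, abs_mul, abs_div (x j), abs_of_pos hu,
    abs_of_nonneg (show 0 ≤ c * jw ξ * (l + 1) / (2 * r) by positivity)]
  have h1 : |x j| / jw x ≤ 1 := (div_le_one hu).2 hxj
  calc _ ≤ (c * jw ξ * (l + 1) / (2 * r)) * 1 := by gcongr
    _ ≤ r / jw x := by
      rw [mul_one, div_le_div_iff₀ (by positivity) hu]
      have : 0 ≤ c * (jw x * jw ξ) * (l - 1) := mul_nonneg (by positivity) (by linarith)
      nlinarith

theorem rho_symm_aux (lam : ℝ → ℝ) {d : ℕ} (t : ℝ) (x ξ : EuclideanSpace ℝ (Fin d)) :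
    rho lam t x ξ = rho lam t ξ x := by
  simp only [rho, mul_comm (jw x)]

/-- From the proof of Lemma 4.1 of the paper: first-order partial derivative bounds
`|∂_{x_j}ρ| ≤ ρ/⟨x⟩` and `|∂_{ξ_j}ρ| ≤ ρ/⟨ξ⟩`. -/
theorem rho_first_order_derivative_estimates
    (d : ℕ) (T : ℝ) (hT : 0 < T) (lam : ℝ → ℝ)
    (hpos : ∀ t ∈ Set.Ioc 0 T, 0 < lam t) :
    ∀ t ∈ Set.Ioc 0 T, ∀ x ξ : EuclideanSpace ℝ (Fin d), ∀ j : Fin d,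
      |fderiv ℝ (fun x' => rho lam t x' ξ) x (EuclideanSpace.single j 1)| ≤
          rho lam t x ξ / jw x ∧
      |fderiv ℝ (fun ξ' => rho lam t x ξ') ξ (EuclideanSpace.single j 1)| ≤
          rho lam t x ξ / jw ξ := by
  intro t ht x ξ j
  have hL := Lam_nonneg_aux T lam hpos t ht
  refine ⟨rho_bound_aux lam t hL x ξ j, ?_⟩
  simp only [rho_symm_aux lam t x]
  exact rho_bound_aux lam t hL ξ x j
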